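/- arXiv:1509.00332 — 3 statements merged into one kernel-verified Lean document; each statement's English description precedes it below -/
import Mathlib

section
/- Let p be a prime. The quotient group ℤ_pˣ/(ℤ_pˣ)² of the unit group of the p-adic integers by its subgroup of squares is cyclic of order 2 if p ≠ 2, and if p = 2 it is isomorphic to a product of two cyclic groups of order 2 (in particular it has order 4 and every element has order dividing 2). -/
/-!
By Hensel's lemma for `X ^ n - u` at the approximate root `1`, every `u ∈ ℤ_pˣ` with
`‖u - 1‖ < ‖n‖ ^ 2` is an `n`-th power. Hence as soon as `p ^ (-k) < ‖n‖ ^ 2`, reduction modulo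
`p ^ k` identifies the `n`-th power classes of `ℤ_pˣ` with those of `(ℤ/p^k)ˣ`. For `n = 2` one may
take `k = 1` if `p` is odd, and `(ℤ/p)ˣ` is cyclic of even order; for `p = 2` one may take `k = 3`,
and `(ℤ/8)ˣ` is a Klein four-group, in which `1` is the only square.
-/

/-- The group `G / Gⁿ` of `n`-th power classes of a commutative group `G`. -/
abbrev PowerClassGroup (G : Type*) [CommGroup G] (n : ℕ) : Type _ :=
  G ⧸ (powMonoidHom n : G →* G).range

section PowerClassGroup

variable {G H : Type*} [CommGroup G] [CommGroup H]

lemma map_range_powMonoidHom_of_surjective {f : G →* H} (hf : Function.Surjective f) (n : ℕ) :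
    (powMonoidHom n : G →* G).range.map f = (powMonoidHom n : H →* H).range := by
  have hcomm : f.comp (powMonoidHom n) = (powMonoidHom n).comp f :=
    MonoidHom.ext fun g ↦ map_pow f g n
  rw [MonoidHom.map_range, hcomm, MonoidHom.range_comp, MonoidHom.range_eq_top.mpr hf,
    ← MonoidHom.range_eq_map]

/-- A surjection `G → H` whose kernel consists of `n`-th powers induces an isomorphism on
`n`-th power classes. -/
noncomputable def powerClassEquivOfSurjective {f : G →* H} (hf : Function.Surjective f) {n : ℕ}
    (hker : f.ker ≤ (powMonoidHom n).range) : PowerClassGroup G n ≃* PowerClassGroup H n :=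
  QuotientGroup.liftEquiv (powMonoidHom n : G →* G).range
    (φ := (QuotientGroup.mk' (powMonoidHom n : H →* H).range).comp f)
    (by simpa only [MonoidHom.coe_comp] using (QuotientGroup.mk'_surjective _).comp hf)
    (by rw [← MonoidHom.comap_ker, QuotientGroup.ker_mk',
      ← map_range_powMonoidHom_of_surjective hf, Subgroup.comap_map_eq_self hker])

lemma range_powMonoidHom_eq_bot_of_exponent_dvd {n : ℕ} (hn : Monoid.exponent G ∣ n) :
    (powMonoidHom n : G →* G).range = ⊥ := by
  rw [MonoidHom.range_eq_bot_iff]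
  exact MonoidHom.ext (Monoid.exponent_dvd_iff_forall_pow_eq_one.mp hn)

end PowerClassGroup

lemma isKleinFour_of_mulEquiv {G H : Type*} [Group G] [Group H] [IsKleinFour G] (e : G ≃* H) :
    IsKleinFour H where
  card_four := by rw [← Nat.card_congr e.toEquiv, IsKleinFour.card_four]
  exponent_two := by rw [← Monoid.exponent_eq_of_mulEquiv e, IsKleinFour.exponent_two]

lemma isKleinFour_units_zmod_eight : IsKleinFour (ZMod 8)ˣ where
  card_four := by
    rw [Nat.card_eq_fintype_card, ZMod.card_units_eq_totient]
    decide
  exponent_two := by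
    have : Nontrivial (ZMod 8)ˣ := ⟨1, -1, by decide⟩
    have hsq : ∀ u : (ZMod 8)ˣ, u ^ 2 = 1 := by decide
    exact (Monoid.exponent_eq_prime_iff Nat.prime_two).mpr fun u hu ↦ orderOf_eq_prime (hsq u) hu

section PadicUnits

variable {p : ℕ} [Fact p.Prime]

lemma mem_range_powMonoidHom_of_norm_sub_one_lt {n : ℕ} {u : ℤ_[p]ˣ}
    (hu : ‖(u : ℤ_[p]) - 1‖ < ‖(n : ℤ_[p])‖ ^ 2) :
    u ∈ (powMonoidHom n : ℤ_[p]ˣ →* ℤ_[p]ˣ).range := by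
  obtain ⟨z, hz, -⟩ := hensels_lemma (p := p) (R := ℤ_[p])
    (F := Polynomial.X ^ n - Polynomial.C (u : ℤ_[p])) (a := 1)
    (by simpa [Polynomial.derivative_X_pow, norm_sub_rev] using hu)
  have hzu : z ^ n = u := by simpa [sub_eq_zero] using hz
  have hn : n ≠ 0 := by
    rintro rfl
    simpa using hu.trans_le' (norm_nonneg _)
  have hz_unit : IsUnit z := (isUnit_pow_iff hn).mp (hzu ▸ u.isUnit)
  exact ⟨hz_unit.unit, Units.ext hzu⟩

lemma units_map_toZModPow_surjective (k : ℕ) :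
    Function.Surjective (Units.map (PadicInt.toZModPow (p := p) k).toMonoidHom) := by
  have hsurj : Function.Surjective (PadicInt.toZModPow (p := p) k) := ZMod.ringHom_surjective _
  rcases subsingleton_or_nontrivial (ZMod (p ^ k)) with _ | _
  · exact Function.surjective_to_subsingleton _
  · exact IsLocalRing.surjective_units_map_of_local_ringHom _ hsurj (.of_surjective _ hsurj)

lemma norm_sub_one_le_of_mem_ker_units_map_toZModPow {k : ℕ} {u : ℤ_[p]ˣ}
    (hu : u ∈ (Units.map (PadicInt.toZModPow (p := p) k).toMonoidHom).ker) :
    ‖(u : ℤ_[p]) - 1‖ ≤ (p : ℝ) ^ (-k : ℤ) := by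
  have hmod : PadicInt.toZModPow k (u : ℤ_[p]) = 1 :=
    congrArg Units.val (MonoidHom.mem_ker.mp hu)
  rw [PadicInt.norm_le_pow_iff_mem_span_pow, ← PadicInt.ker_toZModPow, RingHom.mem_ker, map_sub,
    map_one, hmod, sub_self]

/-- Reduction modulo `p ^ k` on `n`-th power classes of units, for `k` large enough that
`1 + p ^ k ℤ_p` consists of `n`-th powers. -/
noncomputable def padicUnitsPowerClassEquiv {n k : ℕ}
    (hk : (p : ℝ) ^ (-k : ℤ) < ‖(n : ℤ_[p])‖ ^ 2) :
    PowerClassGroup ℤ_[p]ˣ n ≃* PowerClassGroup (ZMod (p ^ k))ˣ n :=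
  powerClassEquivOfSurjective (units_map_toZModPow_surjective k) fun _ hu ↦
    mem_range_powMonoidHom_of_norm_sub_one_lt
      ((norm_sub_one_le_of_mem_ker_units_map_toZModPow hu).trans_lt hk)

lemma nonempty_padicUnits_powerClassGroup_mulEquiv_zmod {n : ℕ} (hn : ¬p ∣ n) :
    Nonempty (PowerClassGroup ℤ_[p]ˣ n ≃* PowerClassGroup (ZMod p)ˣ n) := by
  have hnorm : ‖(n : ℤ_[p])‖ = 1 :=
    PadicInt.norm_natCast_eq_one_iff.mpr ((Fact.out : p.Prime).coprime_iff_not_dvd.mpr hn)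
  have one_lt_p : (1 : ℝ) < p := mod_cast (Fact.out : p.Prime).one_lt
  have e : PowerClassGroup ℤ_[p]ˣ n ≃* PowerClassGroup (ZMod (p ^ 1))ˣ n :=
    padicUnitsPowerClassEquiv (by simpa [hnorm] using inv_lt_one_of_one_lt₀ one_lt_p)
  rw [pow_one] at e
  exact ⟨e⟩

lemma isCyclic_padicUnits_powerClassGroup {n : ℕ} (hn : ¬p ∣ n) :
    IsCyclic (PowerClassGroup ℤ_[p]ˣ n) := by
  obtain ⟨e⟩ := nonempty_padicUnits_powerClassGroup_mulEquiv_zmod hn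
  exact isCyclic_of_surjective (e.symm.toMonoidHom.comp (QuotientGroup.mk' _))
    (e.symm.surjective.comp (QuotientGroup.mk'_surjective _))

lemma card_padicUnits_powerClassGroup {n : ℕ} (hn : ¬p ∣ n) :
    Nat.card (PowerClassGroup ℤ_[p]ˣ n) = (p - 1).gcd n := by
  obtain ⟨e⟩ := nonempty_padicUnits_powerClassGroup_mulEquiv_zmod hn
  calc Nat.card (PowerClassGroup ℤ_[p]ˣ n)
      = (powMonoidHom n : (ZMod p)ˣ →* (ZMod p)ˣ).range.index := Nat.card_congr e.toEquiv
    _ = (Nat.card (ZMod p)ˣ).gcd n := IsCyclic.index_powMonoidHom_range _ n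
    _ = (p - 1).gcd n := by rw [Nat.card_eq_fintype_card, ZMod.card_units]

lemma isKleinFour_padicUnits_two_powerClassGroup_two : IsKleinFour (PowerClassGroup ℤ_[2]ˣ 2) := by
  have : IsKleinFour (ZMod (2 ^ 3))ˣ := isKleinFour_units_zmod_eight
  have hnorm : ‖((2 : ℕ) : ℤ_[2])‖ = 2⁻¹ := by simpa using PadicInt.norm_p (p := 2)
  have hbot : (powMonoidHom 2 : (ZMod (2 ^ 3))ˣ →* (ZMod (2 ^ 3))ˣ).range = ⊥ :=
    range_powMonoidHom_eq_bot_of_exponent_dvd IsKleinFour.exponent_two.dvd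
  let e : PowerClassGroup ℤ_[2]ˣ 2 ≃* (ZMod (2 ^ 3))ˣ :=
    (padicUnitsPowerClassEquiv (k := 3) (by rw [hnorm]; norm_num)).trans
      ((QuotientGroup.quotientMulEquivOfEq hbot).trans QuotientGroup.quotientBot)
  exact isKleinFour_of_mulEquiv e.symm

end PadicUnits

/-- The quotient `ℤ_pˣ/(ℤ_pˣ)²` of the unit group of the `p`-adic integers by its subgroup
of squares is cyclic of order `2` if `p ≠ 2`; if `p = 2` it is isomorphic to a product of
two cyclic groups of order `2` (in particular it has order `4` and every element has
order dividing `2`). -/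
theorem padic_units_mod_squares
    (p : ℕ) [Fact p.Prime] :
    (p ≠ 2 →
      IsCyclic (ℤ_[p]ˣ ⧸ (powMonoidHom 2 : ℤ_[p]ˣ →* ℤ_[p]ˣ).range) ∧
      Nat.card (ℤ_[p]ˣ ⧸ (powMonoidHom 2 : ℤ_[p]ˣ →* ℤ_[p]ˣ).range) = 2) ∧
    (p = 2 →
      Nonempty ((ℤ_[p]ˣ ⧸ (powMonoidHom 2 : ℤ_[p]ˣ →* ℤ_[p]ˣ).range) ≃*
        Multiplicative (ZMod 2) × Multiplicative (ZMod 2)) ∧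
      Nat.card (ℤ_[p]ˣ ⧸ (powMonoidHom 2 : ℤ_[p]ˣ →* ℤ_[p]ˣ).range) = 4 ∧
      ∀ x : ℤ_[p]ˣ ⧸ (powMonoidHom 2 : ℤ_[p]ˣ →* ℤ_[p]ˣ).range, x ^ 2 = 1) := by
  constructor
  · intro hp
    have hp_odd : Odd p := (Fact.out : p.Prime).odd_of_ne_two hp
    have hp_not_dvd : ¬p ∣ 2 := fun h ↦
      hp ((Nat.prime_dvd_prime_iff_eq Fact.out Nat.prime_two).mp h)
    refine ⟨isCyclic_padicUnits_powerClassGroup hp_not_dvd, ?_⟩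
    rw [card_padicUnits_powerClassGroup hp_not_dvd]
    exact Nat.gcd_eq_right (hp_odd.tsub_odd odd_one).two_dvd
  · rintro rfl
    have hklein := isKleinFour_padicUnits_two_powerClassGroup_two
    obtain ⟨e⟩ := IsKleinFour.nonempty_mulEquiv
      (G₁ := PowerClassGroup ℤ_[2]ˣ 2) (G₂ := Multiplicative (ZMod 2 × ZMod 2))
    exact ⟨⟨e.trans (MulEquiv.prodMultiplicative _ _)⟩, hklein.card_four,
      Monoid.exponent_dvd_iff_forall_pow_eq_one.mp hklein.exponent_two.dvd⟩
end

section
/- Let G be a group, let Γ and U be subgroups of G, let R be a commutative ring, let W be an R-module and let σ : U → Aut_R(W) be a group homomorphism (an R-linear representation of U on W). Suppose I is a finite index set and t : I → G is a family of elements such that G is the disjoint union of the double cosets Γ t_i U, i ∈ I. Let S be the R-module of all functions f : G → W satisfying f(γ g u) = σ(u)⁻¹(f(g)) for all γ ∈ Γ, g ∈ G, u ∈ U, with pointwise operations. Then the evaluation map f ↦ (f(t_i))_{i ∈ I} is an R-linear isomorphism from S onto the direct sum over i ∈ I of the submodules W^{Γ_i} := { w ∈ W : σ(u)(w) = w for all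 u ∈ U ∩ t_i⁻¹ Γ t_i }. -/
/-!
An equivariant `f` is determined on `Γ τ U` by `f τ`, and `f τ` is fixed by `U ∩ τ⁻¹ Γ τ`, since
`τ = (τ * u * τ⁻¹) * τ * u⁻¹`. Conversely, for `w` fixed by `U ∩ τ⁻¹ Γ τ`, the rule
`γ * τ * u ↦ σ(u)⁻¹ w` is independent of the choice of `γ` and `u`. Hence evaluation at the `t i`
is injective when the double cosets `Γ (t i) U` cover `G`, and surjective when they are disjoint:
glue the rules of a family of fixed vectors and extend by zero.
-/

/-- The `R`-module of functions `f : G → W` satisfying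
`f (γ * g * u) = σ(u)⁻¹ (f g)` for all `γ ∈ Γ`, `g ∈ G` and `u ∈ U`. -/
def eqvtFns {R G W : Type*} [CommRing R] [Group G] [AddCommGroup W] [Module R W]
    (Γ U : Subgroup G) (σ : U →* (W ≃ₗ[R] W)) : Submodule R (G → W) where
  carrier := {f | ∀ γ ∈ Γ, ∀ (g : G), ∀ (u : G) (hu : u ∈ U),
      f (γ * g * u) = (σ ⟨u, hu⟩)⁻¹ (f g)}
  add_mem' := by
    intro f g hf hg γ hγ x u hu
    simp only [Pi.add_apply, hf γ hγ x u hu, hg γ hγ x u hu, map_add]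
  zero_mem' := by
    intro γ hγ x u hu
    simp only [Pi.zero_apply, map_zero]
  smul_mem' := by
    intro r f hf γ hγ x u hu
    simp only [Pi.smul_apply, hf γ hγ x u hu, map_smul]

/-- The submodule of vectors of `W` fixed by `σ(u)` for all `u ∈ U ∩ τ⁻¹ Γ τ`. -/
def fixedVecs {R G W : Type*} [CommRing R] [Group G] [AddCommGroup W] [Module R W]
    (Γ U : Subgroup G) (σ : U →* (W ≃ₗ[R] W)) (τ : G) : Submodule R W where
  carrier := {w | ∀ (u : G) (hu : u ∈ U), τ * u * τ⁻¹ ∈ Γ → σ ⟨u, hu⟩ w = w}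
  add_mem' := by
    intro w₁ w₂ h₁ h₂ u hu hτ
    simp only [map_add, h₁ u hu hτ, h₂ u hu hτ]
  zero_mem' := by
    intro u hu hτ
    simp only [map_zero]
  smul_mem' := by
    intro r w h u hu hτ
    simp only [map_smul, h u hu hτ]

section

variable {R G W I : Type*} [CommRing R] [Group G] [AddCommGroup W] [Module R W]
  {Γ U : Subgroup G} {σ : U →* (W ≃ₗ[R] W)} {t : I → G}

theorem mem_eqvtFns {f : G → W} :
    f ∈ eqvtFns Γ U σ ↔ ∀ (γ : Γ) (g : G) (u : U), f (γ * g * u) = (σ u)⁻¹ (f g) :=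
  ⟨fun h γ g u => h γ γ.2 g u u.2, fun h γ hγ g u hu => h ⟨γ, hγ⟩ g ⟨u, hu⟩⟩

theorem mem_fixedVecs {τ : G} {w : W} :
    w ∈ fixedVecs Γ U σ τ ↔ ∀ u : U, τ * u * τ⁻¹ ∈ Γ → σ u w = w :=
  ⟨fun h u => h u u.2, fun h u hu => h ⟨u, hu⟩⟩

theorem doubleCosetMk_eq_iff {a b : G} :
    DoubleCoset.mk Γ U a = DoubleCoset.mk Γ U b ↔ ∃ (γ : Γ) (u : U), b = γ * a * u := by
  simp only [DoubleCoset.eq, Subtype.exists, exists_prop]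

theorem doubleCosetMk_mul_mul (γ : Γ) (g : G) (u : U) :
    DoubleCoset.mk Γ U (γ * g * u) = DoubleCoset.mk Γ U g :=
  (doubleCosetMk_eq_iff.2 ⟨γ, u, rfl⟩).symm

theorem bijective_doubleCosetMk_comp_iff :
    (DoubleCoset.mk Γ U ∘ t).Bijective ↔
      ∀ g : G, ∃! i : I, ∃ γ ∈ Γ, ∃ u ∈ U, g = γ * t i * u := by
  have hmk : (DoubleCoset.mk Γ U).Surjective := Quotient.mk''_surjective
  rw [Function.bijective_iff_existsUnique, hmk.forall]
  simp only [Function.comp_apply, DoubleCoset.eq]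

theorem apply_mem_fixedVecs {f : G → W} (hf : f ∈ eqvtFns Γ U σ) (τ : G) :
    f τ ∈ fixedVecs Γ U σ τ := by
  refine mem_fixedVecs.2 fun u hu => ?_
  calc σ u (f τ) = f ((⟨τ * u * τ⁻¹, hu⟩ : Γ) * τ * (u⁻¹ : U)) := by
        rw [mem_eqvtFns.1 hf, map_inv, inv_inv]
    _ = f τ := by simp only [inv_mul_cancel_right, InvMemClass.coe_inv, mul_inv_cancel_right]

theorem eq_of_mem_eqvtFns_of_forall_apply_eq (ht : (DoubleCoset.mk Γ U ∘ t).Surjective)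
    {f f' : G → W} (hf : f ∈ eqvtFns Γ U σ) (hf' : f' ∈ eqvtFns Γ U σ)
    (h : ∀ i, f (t i) = f' (t i)) : f = f' := by
  funext g
  obtain ⟨i, hi⟩ := ht (DoubleCoset.mk Γ U g)
  obtain ⟨γ, u, rfl⟩ := doubleCosetMk_eq_iff.1 hi
  rw [mem_eqvtFns.1 hf, mem_eqvtFns.1 hf', h]

theorem inv_apply_eq_of_mem_fixedVecs {τ : G} {w : W} (hw : w ∈ fixedVecs Γ U σ τ)
    {γ δ : Γ} {u v : U} (h : (γ * τ * u : G) = δ * τ * v) : (σ u)⁻¹ w = (σ v)⁻¹ w := by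
  have hconj : τ * (v * (u : G)⁻¹) * τ⁻¹ = (δ : G)⁻¹ * γ := by
    calc τ * (v * (u : G)⁻¹) * τ⁻¹ = (δ : G)⁻¹ * (δ * τ * v) * (u : G)⁻¹ * τ⁻¹ := by group
      _ = (δ : G)⁻¹ * (γ * τ * u) * (u : G)⁻¹ * τ⁻¹ := by rw [h]
      _ = (δ : G)⁻¹ * γ := by group
  have hmem : τ * (v * u⁻¹ : U) * τ⁻¹ ∈ Γ := hconj ▸ (δ⁻¹ * γ).2
  have hfix : σ (v * u⁻¹) w = w := mem_fixedVecs.1 hw _ hmem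
  calc (σ u)⁻¹ w = (σ v)⁻¹ (σ (v * u⁻¹) w) := by
        rw [← map_inv, ← map_inv, ← LinearEquiv.mul_apply, ← map_mul, inv_mul_cancel_left]
    _ = (σ v)⁻¹ w := by rw [hfix]

/-- The function on `G` glued from vectors `w i` by the rule `γ * t i * u ↦ σ(u)⁻¹ (w i)`, with
value `0` outside the double cosets `Γ (t i) U`. It is meaningful when these double cosets are
disjoint and `w i` is fixed by `U ∩ (t i)⁻¹ Γ (t i)`; otherwise its values depend on choices. -/
noncomputable def glueVecs (Γ : Subgroup G) (σ : U →* (W ≃ₗ[R] W)) (t : I → G) (w : I → W) :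
    G → W :=
  Function.extend (fun x : I × Γ × U => (x.2.1 * t x.1 * x.2.2 : G))
    (fun x => (σ x.2.2)⁻¹ (w x.1)) 0

theorem glueVecs_mul_mul (ht : (DoubleCoset.mk Γ U ∘ t).Injective) {w : I → W}
    (hw : ∀ i, w i ∈ fixedVecs Γ U σ (t i)) (γ : Γ) (i : I) (u : U) :
    glueVecs Γ σ t w (γ * t i * u) = (σ u)⁻¹ (w i) := by
  refine Function.FactorsThrough.extend_apply ?_ (0 : G → W) (i, γ, u)
  rintro ⟨j, δ, v⟩ ⟨k, ε, x⟩ (h : (δ * t j * v : G) = ε * t k * x)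
  obtain rfl : j = k := ht <| by
    simpa only [Function.comp_apply, doubleCosetMk_mul_mul] using
      congrArg (DoubleCoset.mk Γ U) h
  exact inv_apply_eq_of_mem_fixedVecs (hw j) h

theorem glueVecs_apply (ht : (DoubleCoset.mk Γ U ∘ t).Injective) {w : I → W}
    (hw : ∀ i, w i ∈ fixedVecs Γ U σ (t i)) (i : I) : glueVecs Γ σ t w (t i) = w i := by
  simpa only [OneMemClass.coe_one, one_mul, mul_one, map_one, inv_one, LinearEquiv.coe_one, id]
    using glueVecs_mul_mul ht hw 1 i 1

theorem glueVecs_of_notMem_range {w : I → W} {g : G}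
    (hg : DoubleCoset.mk Γ U g ∉ Set.range (DoubleCoset.mk Γ U ∘ t)) :
    glueVecs Γ σ t w g = 0 := by
  refine Function.extend_apply' _ _ _ ?_
  rintro ⟨⟨i, γ, u⟩, rfl⟩
  exact hg ⟨i, (doubleCosetMk_mul_mul γ (t i) u).symm⟩

theorem glueVecs_mem_eqvtFns (ht : (DoubleCoset.mk Γ U ∘ t).Injective) {w : I → W}
    (hw : ∀ i, w i ∈ fixedVecs Γ U σ (t i)) : glueVecs Γ σ t w ∈ eqvtFns Γ U σ := by
  refine mem_eqvtFns.2 fun γ g u => ?_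
  by_cases hg : DoubleCoset.mk Γ U g ∈ Set.range (DoubleCoset.mk Γ U ∘ t)
  · obtain ⟨i, hi⟩ := hg
    obtain ⟨δ, v, rfl⟩ := doubleCosetMk_eq_iff.1 hi
    calc glueVecs Γ σ t w (γ * (δ * t i * v) * u)
        = glueVecs Γ σ t w ((γ * δ : Γ) * t i * (v * u : U)) := by
          simp only [Subgroup.coe_mul, mul_assoc]
      _ = (σ u)⁻¹ ((σ v)⁻¹ (w i)) := by
          rw [glueVecs_mul_mul ht hw, map_mul, mul_inv_rev, LinearEquiv.mul_apply]
      _ = (σ u)⁻¹ (glueVecs Γ σ t w (δ * t i * v)) := by rw [glueVecs_mul_mul ht hw]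
  · rw [glueVecs_of_notMem_range hg,
      glueVecs_of_notMem_range (by rwa [doubleCosetMk_mul_mul]), map_zero]

/-- The evaluation map `f ↦ (f (t i))_i` on equivariant functions, with values in fixed vectors. -/
def evalFixedVecs (Γ U : Subgroup G) (σ : U →* (W ≃ₗ[R] W)) (t : I → G) :
    eqvtFns Γ U σ →ₗ[R] ((i : I) → fixedVecs Γ U σ (t i)) :=
  LinearMap.pi fun i => ((LinearMap.proj (t i)).domRestrict (eqvtFns Γ U σ)).codRestrict
    (fixedVecs Γ U σ (t i)) fun f => apply_mem_fixedVecs f.2 (t i)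

theorem evalFixedVecs_injective (ht : (DoubleCoset.mk Γ U ∘ t).Surjective) :
    Function.Injective (evalFixedVecs Γ U σ t) := fun f f' h =>
  Subtype.ext <| eq_of_mem_eqvtFns_of_forall_apply_eq ht f.2 f'.2 fun i =>
    congrArg Subtype.val (congrFun h i)

theorem evalFixedVecs_surjective (ht : (DoubleCoset.mk Γ U ∘ t).Injective) :
    Function.Surjective (evalFixedVecs Γ U σ t) := fun w =>
  have hw (i : I) : (w i : W) ∈ fixedVecs Γ U σ (t i) := (w i).2
  ⟨⟨glueVecs Γ σ t fun i => w i, glueVecs_mem_eqvtFns ht hw⟩,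
    funext fun i => Subtype.ext (glueVecs_apply ht hw i)⟩

end

theorem eqvtFns_equiv_pi_fixedVecs_general
    {R G W I : Type*} [CommRing R] [Group G] [AddCommGroup W] [Module R W]
    (Γ U : Subgroup G) (σ : U →* (W ≃ₗ[R] W)) (t : I → G)
    (hpart : ∀ g : G, ∃! i : I, ∃ γ ∈ Γ, ∃ u ∈ U, g = γ * t i * u) :
    ∃ e : eqvtFns Γ U σ ≃ₗ[R] ((i : I) → fixedVecs Γ U σ (t i)),
      ∀ (f : eqvtFns Γ U σ) (i : I), ((e f i : W)) = (f : G → W) (t i) := by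
  have ht : (DoubleCoset.mk Γ U ∘ t).Bijective := bijective_doubleCosetMk_comp_iff.2 hpart
  exact ⟨LinearEquiv.ofBijective (evalFixedVecs Γ U σ t)
    ⟨evalFixedVecs_injective ht.2, evalFixedVecs_surjective ht.1⟩, fun _ _ => rfl⟩

/-- Let `Γ, U ≤ G`, let `σ` be an `R`-linear representation of `U` on `W`, and suppose
`G` is the disjoint union of finitely many double cosets `Γ t_i U`.  Then evaluation
`f ↦ (f (t_i))_i` is an `R`-linear isomorphism from the module of `(Γ, U, σ)`-equivariant
functions onto the direct sum over `i` of the submodules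
`W^{U ∩ t_i⁻¹ Γ t_i}` of `σ`-fixed vectors. -/
theorem eqvtFns_equiv_pi_fixedVecs
    {R G W I : Type*} [CommRing R] [Group G] [AddCommGroup W] [Module R W] [Fintype I]
    (Γ U : Subgroup G) (σ : U →* (W ≃ₗ[R] W)) (t : I → G)
    (hpart : ∀ g : G, ∃! i : I, ∃ γ ∈ Γ, ∃ u ∈ U, g = γ * t i * u) :
    ∃ e : eqvtFns Γ U σ ≃ₗ[R] ((i : I) → fixedVecs Γ U σ (t i)),
      ∀ (f : eqvtFns Γ U σ) (i : I), ((e f i : W)) = (f : G → W) (t i) := by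
  exact eqvtFns_equiv_pi_fixedVecs_general Γ U σ t hpart
end

section
/- Let A be a commutative Noetherian local ring of Krull dimension d ≥ 1 and let x₁, …, x_d be a system of parameters of A, i.e. elements of the maximal ideal such that A/(x₁, …, x_d) has Krull dimension 0. Assume A is equidimensional, meaning that A/𝔭 has Krull dimension d for every minimal prime 𝔭 of A. Then for every minimal prime 𝔭 of A there exists a prime ideal 𝔮 of A with 𝔭 ⊆ 𝔮, with x₂, …, x_d ∈ 𝔮, and with x₁ ∉ 𝔮; equivalently, every irreducible component of Spec A contains a point of Spec((A/(x₂, …, x_d))[1/x₁]). -/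
/-!
Dividing by elements of the Jacobson radical of a Noetherian ring lowers the dimension by at most
their number, so `A ⧸ (𝔭 + (x₂, …, x_d))` still has dimension at least one. Adding `x₁` brings the
dimension down to zero. As the dimension of a quotient depends only on the closed set the ideal
defines, `x₁` cannot vanish on all of `V(𝔭 + (x₂, …, x_d))`.
-/

section

variable {A : Type*} [CommRing A]

theorem exists_isPrime_le_not_le_of_ringKrullDim_quotient_sup_lt {I J : Ideal A}
    (h : ringKrullDim (A ⧸ I ⊔ J) < ringKrullDim (A ⧸ I)) :
    ∃ 𝔮 : Ideal A, 𝔮.IsPrime ∧ I ≤ 𝔮 ∧ ¬ J ≤ 𝔮 := by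
  by_contra! hJ
  have hV : PrimeSpectrum.zeroLocus (I ⊔ J : Ideal A) = PrimeSpectrum.zeroLocus (I : Set A) := by
    ext 𝔮
    simpa using hJ 𝔮.asIdeal 𝔮.isPrime
  rw [ringKrullDim_quotient, ringKrullDim_quotient, hV] at h
  exact h.false

theorem ringKrullDim_quotient_le_quotient_sup_span_add_encard [IsNoetherianRing A] (I : Ideal A)
    {s : Set A} (hs : s ⊆ Ring.jacobson A) :
    ringKrullDim (A ⧸ I) ≤ ringKrullDim (A ⧸ I ⊔ Ideal.span s) + s.encard := by
  let π := Ideal.Quotient.mk I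
  have : RingHomSurjective π := ⟨Ideal.Quotient.mk_surjective⟩
  have hπs : π '' s ⊆ Ring.jacobson (A ⧸ I) :=
    Set.image_subset_iff.2 fun _ ha ↦ Ring.le_comap_jacobson π (hs ha)
  calc
    ringKrullDim (A ⧸ I) ≤ ringKrullDim ((A ⧸ I) ⧸ Ideal.span (π '' s)) + (π '' s).encard :=
      ringKrullDim_le_ringKrullDim_quotient_add_encard _ hπs
    _ = ringKrullDim (A ⧸ I ⊔ Ideal.span s) + (π '' s).encard := by
      rw [← Ideal.map_span, (DoubleQuot.quotQuotEquivQuotSup I (Ideal.span s)).ringKrullDim]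
    _ ≤ ringKrullDim (A ⧸ I ⊔ Ideal.span s) + s.encard := by
      gcongr
      exact_mod_cast Set.encard_image_le π s

theorem exists_isPrime_notMem_of_ringKrullDim_quotient_add_encard_lt [IsNoetherianRing A]
    {I : Ideal A} {a : A} {s : Set A} (hs : s ⊆ Ring.jacobson A)
    (h : ringKrullDim (A ⧸ I ⊔ Ideal.span (insert a s)) + s.encard < ringKrullDim (A ⧸ I)) :
    ∃ 𝔮 : Ideal A, 𝔮.IsPrime ∧ I ≤ 𝔮 ∧ s ⊆ 𝔮 ∧ a ∉ 𝔮 := by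
  have hsup : I ⊔ Ideal.span (insert a s) = I ⊔ Ideal.span s ⊔ Ideal.span {a} := by
    rw [Ideal.span_insert, sup_comm (Ideal.span {a}), sup_assoc]
  have hdrop : ringKrullDim (A ⧸ I ⊔ Ideal.span s ⊔ Ideal.span {a}) <
      ringKrullDim (A ⧸ I ⊔ Ideal.span s) := by
    rw [← hsup]
    exact lt_of_add_lt_add_right
      (h.trans_le (ringKrullDim_quotient_le_quotient_sup_span_add_encard I hs))
  obtain ⟨𝔮, h𝔮, hle, ha⟩ := exists_isPrime_le_not_le_of_ringKrullDim_quotient_sup_lt hdrop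
  obtain ⟨hI, hs𝔮⟩ := sup_le_iff.1 hle
  exact ⟨𝔮, h𝔮, hI, Ideal.span_le.1 hs𝔮, by rwa [Ideal.span_singleton_le_iff_mem] at ha⟩

theorem minimalPrime_le_prime_avoiding_first_parameter_general [IsNoetherianRing A]
    {ι : Type*} [Finite ι] (x : ι → A) (i₀ : ι) (hx : ∀ i ≠ i₀, x i ∈ Ring.jacobson A)
    (I : Ideal A) (hsop : ringKrullDim (A ⧸ I ⊔ Ideal.span (Set.range x)) ≤ 0)
    (hI : Nat.card ι ≤ ringKrullDim (A ⧸ I)) :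
    ∃ 𝔮 : Ideal A, 𝔮.IsPrime ∧ I ≤ 𝔮 ∧ (∀ i ≠ i₀, x i ∈ 𝔮) ∧ x i₀ ∉ 𝔮 := by
  have hs : x '' {i₀}ᶜ ⊆ Ring.jacobson A := Set.image_subset_iff.2 hx
  have hcard : (x '' {i₀}ᶜ).encard < Nat.card ι := calc
    (x '' {i₀}ᶜ).encard ≤ ({i₀}ᶜ : Set ι).encard := Set.encard_image_le ..
    _ < ENat.card ι := (Set.toFinite _).encard_lt_card (by simp)
    _ = Nat.card ι := ENat.card_eq_coe_natCard ι
  have hdrop : ringKrullDim (A ⧸ I ⊔ Ideal.span (insert (x i₀) (x '' {i₀}ᶜ))) +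
      (x '' {i₀}ᶜ).encard < ringKrullDim (A ⧸ I) := calc
    _ ≤ 0 + ((x '' {i₀}ᶜ).encard : WithBot ℕ∞) := by
      rw [Set.insert_image_compl_eq_range]
      gcongr
    _ < Nat.card ι := by
      rw [zero_add]
      exact_mod_cast hcard
    _ ≤ ringKrullDim (A ⧸ I) := hI
  obtain ⟨𝔮, h𝔮, hI𝔮, hx𝔮, hx₀⟩ :=
    exists_isPrime_notMem_of_ringKrullDim_quotient_add_encard_lt hs hdrop
  exact ⟨𝔮, h𝔮, hI𝔮, Set.image_subset_iff.1 hx𝔮, hx₀⟩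

end

/-- Let `A` be a Noetherian local ring of Krull dimension `d ≥ 1`, let `x₁, …, x_d` be a
system of parameters of `A`, and assume `A` is equidimensional (every minimal prime `𝔭`
satisfies `dim A/𝔭 = d`).  Then every irreducible component of `Spec A` contains a point
of `Spec ((A/(x₂, …, x_d))[1/x₁])`: for every minimal prime `𝔭` there is a prime `𝔮`
containing `𝔭` and `x₂, …, x_d` but not `x₁`. -/
theorem minimalPrime_le_prime_avoiding_first_parameter
    (A : Type*) [CommRing A] [IsNoetherianRing A] [IsLocalRing A]
    (d : ℕ) (hd : 1 ≤ d) (hdim : ringKrullDim A = (d : WithBot ℕ∞))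
    (x : Fin d → A) (hx : ∀ i, x i ∈ IsLocalRing.maximalIdeal A)
    (hsop : ringKrullDim (A ⧸ Ideal.span (Set.range x)) = 0)
    (hequi : ∀ 𝔭 ∈ minimalPrimes A, ringKrullDim (A ⧸ 𝔭) = (d : WithBot ℕ∞)) :
    ∀ 𝔭 ∈ minimalPrimes A, ∃ 𝔮 : Ideal A, 𝔮.IsPrime ∧ 𝔭 ≤ 𝔮 ∧
      (∀ i : Fin d, i ≠ ⟨0, hd⟩ → x i ∈ 𝔮) ∧ x ⟨0, hd⟩ ∉ 𝔮 := by
  intro 𝔭 h𝔭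
  have hJac : ∀ i, x i ∈ Ring.jacobson A := by rwa [IsLocalRing.ringJacobson_eq_maximalIdeal]
  have hsop_sup : ringKrullDim (A ⧸ 𝔭 ⊔ Ideal.span (Set.range x)) ≤ 0 :=
    hsop ▸ ringKrullDim_le_of_surjective _ (Ideal.Quotient.factor_surjective le_sup_right)
  exact minimalPrime_le_prime_avoiding_first_parameter_general x ⟨0, hd⟩ (fun i _ ↦ hJac i) 𝔭
    hsop_sup (by rw [Nat.card_fin, hequi 𝔭 h𝔭])
end
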